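/- Let (X,d_X) and (Y,d_Y) be length spaces, w_d : Y → [0,∞) continuous, and γ = (γ^Y,γ^X) : [0,1] → Y × X a curve with both components absolutely continuous. Then the w_d-length of γ, defined as the limit over refining partitions τ = {0 = t₀ < t₁ < … < t_n = 1} of Σ_{i=1}^n sqrt(d_Y²(γ^Y_{t_{i−1}},γ^Y_{t_i}) + w_d²(γ^Y_{t_{i−1}})·d_X²(γ^X_{t_{i−1}},γ^X_{t_i})), exists and equals ∫₀¹ sqrt(|γ̇^Y_t|² + w_d²(γ^Y_t)|γ̇^X_t|²) dt. -/

import Mathlib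

open MeasureTheory Filter Set Metric Topology ENNReal

noncomputable section

namespace MMS

/-- The space of continuous curves defined on `[0,1]` with values in `Z`. -/
abbrev Curve (Z : Type*) [MetricSpace Z] : Type _ := C(unitInterval, Z)

/-- The projection of `ℝ` onto `[0,1]`. -/
def pr (t : ℝ) : unitInterval := Set.projIcc 0 1 zero_le_one t

variable {Z : Type*} [MetricSpace Z]

/-- The metric speed (metric derivative) of a curve at a point `t ∈ [0,1]`. -/
def speed (γ : Curve Z) (t : unitInterval) : ℝ :=
  limsup (fun s : unitInterval => dist (γ s) (γ t) / dist s t) (𝓝[≠] t)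

/-- The metric speed as a function of a real parameter. -/
def speedR (γ : Curve Z) (t : ℝ) : ℝ := speed γ (pr t)

/-- A curve is absolutely continuous if `dist (γ s) (γ t) ≤ ∫_s^t G` for some
integrable nonnegative `G`. -/
def IsAC (γ : Curve Z) : Prop :=
  ∃ G : ℝ → ℝ, (∀ t, 0 ≤ G t) ∧ IntegrableOn G (Icc (0:ℝ) 1) ∧
    ∀ s t : unitInterval, s ≤ t → dist (γ s) (γ t) ≤ ∫ r in (s : ℝ)..(t : ℝ), G r


/-- The length `∫₀¹ |γ̇_t| dt` of a curve. -/
def lengthE (γ : Curve Z) : ℝ≥0∞ :=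
  ∫⁻ t in Icc (0:ℝ) 1, ENNReal.ofReal (speedR γ t)

/-- A length space: the distance is the infimum of lengths of absolutely continuous
curves joining two given points. -/
def IsLengthSpace (Z : Type*) [MetricSpace Z] : Prop :=
  ∀ x y : Z, ENNReal.ofReal (dist x y)
    = ⨅ (γ : Curve Z) (_ : IsAC γ ∧ γ 0 = x ∧ γ 1 = y), lengthE γ

/-- Sum of `F` over consecutive pairs of a list. -/
def pairSum {α : Type*} (F : α → α → ℝ) : List α → ℝ
  | a :: b :: l => F a b + pairSum F (b :: l)
  | _ => 0

open scoped Classical in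
/-- The sum `Σ F (t_{i-1}) (t_i)` associated to a partition
`τ = {t_0 < t_1 < ... < t_n}` of `[0,1]`, encoded as a finite subset of `[0,1]`. -/
def partitionSum (F : unitInterval → unitInterval → ℝ) (s : Finset unitInterval) : ℝ :=
  pairSum F (s.sort (· ≤ ·))

/-- The filter of refining partitions of `[0,1]` (partitions required to contain the
endpoints, ordered by refinement). -/
def refinements : Filter (Finset unitInterval) :=
  (atTop : Filter (Finset unitInterval)) ⊓ 𝓟 {s | (0 : unitInterval) ∈ s ∧ (1 : unitInterval) ∈ s}

/-!
Say that a function `φ a b` of two points of `[0, 1]` approximates `f` if its step functions, equal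
to `φ a b` on each cell `[a, b]` of a partition, converge to `f` in `L¹(0, 1)` along refining
partitions. Then `Σ (b - a) φ a b → ∫ f`, and the relation is preserved by Lipschitz maps, by
pairing, and by multiplication by a continuous weight evaluated at the left endpoints. Since
`√(u² + v²)` is Lipschitz in `(u, v)`, it is enough that `d(γ_a, γ_b) / (b - a)` approximates the
metric speed of an absolutely continuous curve `γ`.

By Lebesgue differentiation, the metric speed is almost everywhere the supremum over `n` of
`|d/dt d(γ_t, z_n)|`, where `z_n` is dense in the curve. Hence `d(γ_a, γ_b) / (b - a)` lies between
the maxima over `n ≤ N` of the absolute values of the averages of these derivatives and the average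
of the metric speed, and the averages of an integrable function approximate it.
-/

section PairSum

variable {α : Type*}

lemma pairSum_le_pairSum {F F' : α → α → ℝ} {R : α → α → Prop}
    (h : ∀ a b, R a b → F a b ≤ F' a b) :
    ∀ {l : List α}, l.IsChain R → pairSum F l ≤ pairSum F' l
  | [], _ => le_rfl
  | [_], _ => le_rfl
  | _ :: _ :: _, hl =>
    have hl := List.isChain_cons_cons.1 hl
    add_le_add (h _ _ hl.1) (pairSum_le_pairSum h hl.2)

lemma pairSum_add (F F' : α → α → ℝ) :
    ∀ l : List α, pairSum (fun a b => F a b + F' a b) l = pairSum F l + pairSum F' l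
  | [] => (add_zero 0).symm
  | [_] => (add_zero 0).symm
  | a :: b :: l => by
    simp only [pairSum, pairSum_add F F' (b :: l)]
    ring

lemma pairSum_const_mul (c : ℝ) (F : α → α → ℝ) :
    ∀ l : List α, pairSum (fun a b => c * F a b) l = c * pairSum F l
  | [] => (mul_zero c).symm
  | [_] => (mul_zero c).symm
  | a :: b :: l => by simp only [pairSum, pairSum_const_mul c F (b :: l), mul_add]

lemma pairSum_sub_eq (f : α → ℝ) :
    ∀ (l : List α) (hl : l ≠ []),
      pairSum (fun a b => f b - f a) l = f (l.getLast hl) - f (l.head hl)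
  | [_], _ => (sub_self _).symm
  | a :: b :: l, _ => by
    simp only [pairSum, pairSum_sub_eq f (b :: l) (List.cons_ne_nil _ _), List.head_cons,
      List.getLast_cons_cons, sub_add_sub_cancel']

lemma isChain_sort_lt_and_notMem_Ioo [LinearOrder α] (s : Finset α) :
    s.sort.IsChain fun a b => a < b ∧ ∀ c ∈ s, c ∉ Ioo a b := by
  have hmono : StrictMono s.sort.get := s.sortedLT_sort.strictMono_get
  refine List.isChain_iff_getElem.2 fun i hi =>
    ⟨hmono (a := ⟨i, by lia⟩) (b := ⟨i + 1, hi⟩) (Nat.lt_succ_self i), fun c hc hcI => ?_⟩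
  obtain ⟨j, hj, rfl⟩ := List.getElem_of_mem ((Finset.mem_sort (· ≤ ·)).2 hc)
  have hij : i < j := hmono.lt_iff_lt (a := ⟨i, by lia⟩) (b := ⟨j, hj⟩) |>.1 hcI.1
  have hji : j < i + 1 := hmono.lt_iff_lt (a := ⟨j, hj⟩) (b := ⟨i + 1, hi⟩) |>.1 hcI.2
  lia

end PairSum

section PartitionSum

variable {F F' : unitInterval → unitInterval → ℝ}

lemma partitionSum_mono (h : ∀ a b, a < b → F a b ≤ F' a b) (s : Finset unitInterval) :
    partitionSum F s ≤ partitionSum F' s :=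
  pairSum_le_pairSum (R := (· < ·)) h (s.sortedLT_sort.isChain)

lemma partitionSum_nonneg (h : ∀ a b, a < b → 0 ≤ F a b) (s : Finset unitInterval) :
    0 ≤ partitionSum F s := by
  have hzero : partitionSum (fun _ _ => 0) s = 0 := by
    simpa only [partitionSum, zero_mul] using pairSum_const_mul 0 (fun _ _ => 0) s.sort
  exact hzero.symm.trans_le (partitionSum_mono h s)

lemma partitionSum_congr (h : ∀ a b, a < b → F a b = F' a b) (s : Finset unitInterval) :
    partitionSum F s = partitionSum F' s :=
  (partitionSum_mono (fun a b hab => (h a b hab).le) s).antisymm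
    (partitionSum_mono (fun a b hab => (h a b hab).ge) s)

lemma tendsto_partitionSum_add {x y : ℝ} (hF : Tendsto (partitionSum F) refinements (𝓝 x))
    (hF' : Tendsto (partitionSum F') refinements (𝓝 y)) :
    Tendsto (partitionSum fun a b => F a b + F' a b) refinements (𝓝 (x + y)) :=
  (hF.add hF').congr fun _ => (pairSum_add _ _ _).symm

lemma tendsto_partitionSum_const_mul {x : ℝ} (c : ℝ)
    (hF : Tendsto (partitionSum F) refinements (𝓝 x)) :
    Tendsto (partitionSum fun a b => c * F a b) refinements (𝓝 (c * x)) :=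
  (hF.const_mul c).congr fun _ => (pairSum_const_mul _ _ _).symm

lemma eventually_refinements_superset (s₀ : Finset unitInterval) :
    ∀ᶠ s in refinements, s₀ ⊆ s ∧ 0 ∈ s ∧ 1 ∈ s :=
  eventually_inf_principal.2 <| (eventually_ge_atTop s₀).mono fun _ hs h01 => ⟨hs, h01⟩

lemma eventually_isChain_sort_dist_lt {δ : ℝ} (hδ : 0 < δ) :
    ∀ᶠ s in refinements, s.sort.IsChain fun a b : unitInterval => a < b ∧ dist a b < δ := by
  obtain ⟨t, -, ht, hcover⟩ :=
    finite_cover_balls_of_compact (isCompact_univ (X := unitInterval)) (half_pos hδ)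
  filter_upwards [eventually_refinements_superset ht.toFinset] with s hs
  refine (isChain_sort_lt_and_notMem_Ioo s).imp fun a b ⟨hab, hIoo⟩ => ⟨hab, ?_⟩
  by_contra! hδab
  have hab' : (a : ℝ) < b := hab
  rw [Subtype.dist_eq, Real.dist_eq, abs_of_neg (sub_neg.2 hab')] at hδab
  let mid : unitInterval :=
    ⟨((a : ℝ) + b) / 2, by linarith [a.2.1, b.2.1], by linarith [a.2.2, b.2.2]⟩
  have hmid : (mid : ℝ) = ((a : ℝ) + b) / 2 := rfl
  obtain ⟨c, hct, hc⟩ := mem_iUnion₂.1 (hcover (mem_univ mid))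
  rw [mem_ball, Subtype.dist_eq, Real.dist_eq, hmid, abs_lt] at hc
  have hac : (a : ℝ) < c := by linarith [hc.2]
  have hcb : (c : ℝ) < b := by linarith [hc.1]
  exact hIoo c (hs.1 (ht.mem_toFinset.2 hct)) ⟨hac, hcb⟩

lemma eventually_partitionSum_le {δ : ℝ} (hδ : 0 < δ)
    (h : ∀ a b : unitInterval, a < b → dist a b < δ → F a b ≤ F' a b) :
    ∀ᶠ s in refinements, partitionSum F s ≤ partitionSum F' s :=
  (eventually_isChain_sort_dist_lt hδ).mono fun _ =>
    pairSum_le_pairSum fun a b hab => h a b hab.1 hab.2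

lemma tendsto_partitionSum_sub (f : unitInterval → ℝ) :
    Tendsto (partitionSum fun a b => f b - f a) refinements (𝓝 (f 1 - f 0)) := by
  refine tendsto_const_nhds.congr' ?_
  filter_upwards [eventually_refinements_superset ∅] with s hs
  have hsort := s.pairwise_sort (· ≤ ·)
  have h0 : 0 ∈ s.sort := (Finset.mem_sort _).2 hs.2.1
  have h1 : 1 ∈ s.sort := (Finset.mem_sort _).2 hs.2.2
  have hhead : s.sort.head (List.ne_nil_of_mem h0) = 0 :=
    (hsort.rel_head h0).antisymm unitInterval.nonneg'
  have hlast : s.sort.getLast (List.ne_nil_of_mem h0) = 1 :=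
    unitInterval.le_one'.antisymm (hsort.rel_getLast h1)
  rw [← hhead, ← hlast]
  exact (pairSum_sub_eq f _ _).symm

end PartitionSum

section Integrals

lemma tendsto_integral_abs_iSup_sub_partialSups {α : Type*} [MeasurableSpace α] {μ : Measure α}
    {g : ℕ → α → ℝ} (hg : ∀ n, Integrable (g n) μ)
    (hbdd : ∀ᵐ x ∂μ, BddAbove (range fun n => g n x))
    (hsup : Integrable (fun x => ⨆ n, g n x) μ) :
    Tendsto (fun N => ∫ x, |(⨆ n, g n x) - partialSups (fun n => g n x) N| ∂μ) atTop (𝓝 0) := by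
  have hP (N) : Integrable (fun x => partialSups (fun n => g n x) N) μ := by
    induction N with
    | zero => simpa only [partialSups_zero] using hg 0
    | succ N ih =>
      simp only [partialSups_add_one]
      exact ih.sup (hg (N + 1))
  have hlim : Tendsto (fun N => ∫ x, partialSups (fun n => g n x) N ∂μ) atTop
      (𝓝 (∫ x, ⨆ n, g n x ∂μ)) := by
    refine integral_tendsto_of_tendsto_of_monotone hP hsup
      (.of_forall fun x => (partialSups fun n => g n x).monotone) ?_
    filter_upwards [hbdd] with x hx
    rw [← ciSup_partialSups_eq hx]
    exact tendsto_atTop_ciSup (partialSups fun n => g n x).monotone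
      (bddAbove_range_partialSups.2 hx)
  rw [← sub_self (∫ x, ⨆ n, g n x ∂μ)]
  refine (hlim.const_sub _).congr fun N => ?_
  rw [← integral_sub hsup (hP N)]
  refine integral_congr_ae ?_
  filter_upwards [hbdd] with x hx
  rw [abs_of_nonneg (sub_nonneg.2 (partialSups_le _ _ _ fun n _ => le_ciSup hx n))]

variable {E : Type*} [NormedAddCommGroup E]

lemma intervalIntegrable_coe_unitInterval {f : ℝ → E} (hf : IntervalIntegrable f volume 0 1)
    (a b : unitInterval) : IntervalIntegrable f volume a b :=
  hf.mono_set <| uIcc_subset_uIcc (uIcc_of_le (zero_le_one' ℝ) ▸ a.2)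
    (uIcc_of_le (zero_le_one' ℝ) ▸ b.2)

lemma intervalIntegrable_norm_sub_const {f : ℝ → E} (hf : IntervalIntegrable f volume 0 1)
    (a b : unitInterval) (c : E) :
    IntervalIntegrable (fun r => ‖f r - c‖) volume a b :=
  ((intervalIntegrable_coe_unitInterval hf a b).sub intervalIntegrable_const).norm

variable [NormedSpace ℝ E]

lemma integral_sub_integral_coe_unitInterval {f : ℝ → E} (hf : IntervalIntegrable f volume 0 1)
    (a b : unitInterval) :
    (∫ r in (0 : ℝ)..b, f r) - ∫ r in (0 : ℝ)..a, f r = ∫ r in (a : ℝ)..b, f r :=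
  intervalIntegral.integral_interval_sub_left (intervalIntegrable_coe_unitInterval hf 0 b)
    (intervalIntegrable_coe_unitInterval hf 0 a)

lemma tendsto_partitionSum_integral {f : ℝ → ℝ} (hf : IntervalIntegrable f volume 0 1) :
    Tendsto (partitionSum fun a b => ∫ r in (a : ℝ)..b, f r) refinements
      (𝓝 (∫ r in (0 : ℝ)..1, f r)) := by
  simpa only [integral_sub_integral_coe_unitInterval hf, Icc.coe_zero, Icc.coe_one,
    intervalIntegral.integral_same, sub_zero] using
    tendsto_partitionSum_sub fun t : unitInterval => ∫ r in (0 : ℝ)..t, f r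

lemma integral_norm_sub_average_le [CompleteSpace E] {f : ℝ → E} {a b : ℝ} (hab : a < b)
    (hf : IntervalIntegrable f volume a b) (c : E) :
    ∫ r in a..b, ‖f r - ⨍ u in a..b, f u‖ ≤ 2 * ∫ r in a..b, ‖f r - c‖ := by
  have hba : 0 < b - a := sub_pos.2 hab
  have hfc : IntervalIntegrable (fun r => ‖f r - c‖) volume a b :=
    (hf.sub intervalIntegrable_const).norm
  have haverage : (⨍ u in a..b, f u) - c = (b - a)⁻¹ • ∫ u in a..b, (f u - c) := by
    rw [intervalIntegral.integral_sub hf intervalIntegrable_const,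
      intervalIntegral.integral_const, smul_sub, inv_smul_smul₀ hba.ne', interval_average_eq]
  have hdist : (b - a) * ‖c - ⨍ u in a..b, f u‖ ≤ ∫ r in a..b, ‖f r - c‖ := by
    rw [norm_sub_rev, haverage, norm_smul, norm_inv, Real.norm_of_nonneg hba.le,
      mul_inv_cancel_left₀ hba.ne']
    exact intervalIntegral.norm_integral_le_integral_norm hab.le
  calc ∫ r in a..b, ‖f r - ⨍ u in a..b, f u‖
      ≤ ∫ r in a..b, (‖f r - c‖ + ‖c - ⨍ u in a..b, f u‖) :=
        intervalIntegral.integral_mono_on hab.le (hf.sub intervalIntegrable_const).norm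
          (hfc.add intervalIntegrable_const) fun _ _ => norm_sub_le_norm_sub_add_norm_sub _ _ _
    _ = (∫ r in a..b, ‖f r - c‖) + (b - a) * ‖c - ⨍ u in a..b, f u‖ := by
        rw [intervalIntegral.integral_add hfc intervalIntegrable_const,
          intervalIntegral.integral_const, smul_eq_mul]
    _ ≤ 2 * ∫ r in a..b, ‖f r - c‖ := by linarith

end Integrals

lemma pr_coe (t : unitInterval) : pr t = t := projIcc_val _ t

lemma uniformContinuous_pr : UniformContinuous pr :=
  (LipschitzWith.projIcc zero_le_one).uniformContinuous

lemma dist_left_lt_of_mem_Icc {a b : unitInterval} {δ r : ℝ} (hab : dist a b < δ)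
    (hr : r ∈ Icc (a : ℝ) b) : dist r a < δ :=
  dist_comm r a ▸ (Real.dist_left_le_of_mem_uIcc (Icc_subset_uIcc hr)).trans_lt hab

section L1Approx

variable {E F : Type*} [NormedAddCommGroup E] [NormedAddCommGroup F]

/-- The step functions equal to `φ a b` on each cell `[a, b]` of a partition of `[0, 1]` converge
to `f` in `L¹(0, 1)` along refining partitions. -/
structure IsL1Approx (φ : unitInterval → unitInterval → E) (f : ℝ → E) : Prop where
  intervalIntegrable : IntervalIntegrable f volume 0 1
  tendsto_zero :
    Tendsto (partitionSum fun a b => ∫ r in (a : ℝ)..b, ‖f r - φ a b‖) refinements (𝓝 0)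

lemma isL1Approx_of_forall_le {φ : unitInterval → unitInterval → E} {f : ℝ → E}
    (hf : IntervalIntegrable f volume 0 1)
    (h : ∀ ε > 0, ∃ (G : unitInterval → unitInterval → ℝ) (L : ℝ), L < ε ∧
      Tendsto (partitionSum G) refinements (𝓝 L) ∧
      ∃ δ > 0, ∀ a b, a < b → dist a b < δ → ∫ r in (a : ℝ)..b, ‖f r - φ a b‖ ≤ G a b) :
    IsL1Approx φ f := by
  have hnonneg := partitionSum_nonneg (F := fun a b => ∫ r in (a : ℝ)..b, ‖f r - φ a b‖)
    fun a b hab => intervalIntegral.integral_nonneg (Subtype.coe_le_coe.2 hab.le)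
      fun _ _ => norm_nonneg _
  refine ⟨hf, tendsto_order.2 ⟨fun c hc => .of_forall fun s => hc.trans_le (hnonneg s),
    fun ε hε => ?_⟩⟩
  obtain ⟨G, L, hLε, hG, δ, hδ, hle⟩ := h ε hε
  filter_upwards [eventually_partitionSum_le hδ hle, hG.eventually_lt_const hLε] with s hs hsε
  exact hs.trans_lt hsε

lemma IsL1Approx.map {φ : unitInterval → unitInterval → E} {f : ℝ → E} {K : NNReal} {Φ : E → F}
    (h : IsL1Approx φ f) (hΦ : LipschitzWith K Φ) :
    IsL1Approx (fun a b => Φ (φ a b)) fun r => Φ (f r) := by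
  have hΦf : IntervalIntegrable (fun r => Φ (f r)) volume 0 1 := by
    refine (intervalIntegrable_const (c := ‖Φ 0‖) |>.add
      (h.intervalIntegrable.norm.const_mul K)).mono_fun'
      (hΦ.continuous.comp_aestronglyMeasurable
        h.intervalIntegrable.aestronglyMeasurable_restrict_uIoc)
      (.of_forall fun r => ?_)
    have hdist := hΦ.dist_le_mul (f r) 0
    rw [dist_eq_norm, dist_zero_right] at hdist
    exact (norm_le_norm_add_norm_sub' _ _).trans (add_le_add_right hdist _)
  refine isL1Approx_of_forall_le hΦf fun ε hε =>
    ⟨fun a b => K * ∫ r in (a : ℝ)..b, ‖f r - φ a b‖, K * 0, by rwa [mul_zero],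
      tendsto_partitionSum_const_mul _ h.tendsto_zero, 1, one_pos, fun a b hab _ => ?_⟩
  simp only [← intervalIntegral.integral_const_mul]
  exact intervalIntegral.integral_mono_on (Subtype.coe_le_coe.2 hab.le)
    (intervalIntegrable_norm_sub_const hΦf a b _)
    ((intervalIntegrable_norm_sub_const h.intervalIntegrable a b _).const_mul _)
    fun r _ => hΦ.norm_sub_le _ _

lemma IsL1Approx.prodMk {φ : unitInterval → unitInterval → E} {f : ℝ → E}
    {ψ : unitInterval → unitInterval → F} {g : ℝ → F} (hf : IsL1Approx φ f)
    (hg : IsL1Approx ψ g) : IsL1Approx (fun a b => (φ a b, ψ a b)) fun r => (f r, g r) := by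
  have hfg : IntervalIntegrable (fun r => (f r, g r)) volume 0 1 :=
    ⟨hf.intervalIntegrable.1.prodMk hg.intervalIntegrable.1,
      hf.intervalIntegrable.2.prodMk hg.intervalIntegrable.2⟩
  refine isL1Approx_of_forall_le hfg fun ε hε =>
    ⟨_, 0 + 0, by rwa [add_zero], tendsto_partitionSum_add hf.tendsto_zero hg.tendsto_zero,
      1, one_pos, fun a b hab _ => ?_⟩
  have hfi := intervalIntegrable_norm_sub_const hf.intervalIntegrable a b (φ a b)
  have hgi := intervalIntegrable_norm_sub_const hg.intervalIntegrable a b (ψ a b)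
  rw [← intervalIntegral.integral_add hfi hgi]
  exact intervalIntegral.integral_mono_on (Subtype.coe_le_coe.2 hab.le)
    (intervalIntegrable_norm_sub_const hfg a b _) (hfi.add hgi)
    fun r _ => max_le_add_of_nonneg (norm_nonneg _) (norm_nonneg _)

variable [NormedSpace ℝ E]

lemma IsL1Approx.smul {φ : unitInterval → unitInterval → E} {f : ℝ → E} (h : IsL1Approx φ f)
    {w : unitInterval → ℝ} (hw : Continuous w) :
    IsL1Approx (fun a b => w a • φ a b) fun r => w (pr r) • f r := by
  have hf := h.intervalIntegrable
  have hwf : IntervalIntegrable (fun r => w (pr r) • f r) volume 0 1 :=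
    hf.continuousOn_smul (hw.comp uniformContinuous_pr.continuous).continuousOn
  obtain ⟨C, hC⟩ := isCompact_univ.exists_bound_of_continuousOn hw.continuousOn
  set I := ∫ r in (0 : ℝ)..1, ‖f r‖
  have hI : 0 ≤ I := intervalIntegral.integral_nonneg zero_le_one fun _ _ => norm_nonneg _
  refine isL1Approx_of_forall_le hwf fun ε hε => ?_
  obtain ⟨η, hη, hηI⟩ : ∃ η > 0, η * I < ε :=
    ⟨ε / (I + 1), by positivity, by rw [div_mul_eq_mul_div, div_lt_iff₀] <;> nlinarith⟩
  obtain ⟨δ, hδ, hwδ⟩ := Metric.uniformContinuous_iff.1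
    ((CompactSpace.uniformContinuous_of_continuous hw).comp uniformContinuous_pr) η hη
  refine ⟨_, _, ?_, tendsto_partitionSum_add
    (tendsto_partitionSum_const_mul η (tendsto_partitionSum_integral hf.norm))
    (tendsto_partitionSum_const_mul C h.tendsto_zero), δ, hδ, fun a b hab hδab => ?_⟩
  · rwa [mul_zero, add_zero]
  have hfi := ((intervalIntegrable_coe_unitInterval hf a b).norm).const_mul η
  have hφi := (intervalIntegrable_norm_sub_const hf a b (φ a b)).const_mul C
  rw [← intervalIntegral.integral_const_mul, ← intervalIntegral.integral_const_mul,
    ← intervalIntegral.integral_add hfi hφi]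
  refine intervalIntegral.integral_mono_on (Subtype.coe_le_coe.2 hab.le)
    (intervalIntegrable_norm_sub_const hwf a b _) (hfi.add hφi) fun r hr => ?_
  calc ‖w (pr r) • f r - w a • φ a b‖
      = ‖(w (pr r) - w a) • f r + w a • (f r - φ a b)‖ := by
        rw [sub_smul, smul_sub, sub_add_sub_cancel]
    _ ≤ ‖w (pr r) - w a‖ * ‖f r‖ + ‖w a‖ * ‖f r - φ a b‖ := by
        simpa only [norm_smul] using norm_add_le ((w (pr r) - w a) • f r) (w a • (f r - φ a b))
    _ ≤ η * ‖f r‖ + C * ‖f r - φ a b‖ := by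
        gcongr
        · have hra := hwδ (dist_left_lt_of_mem_Icc hδab hr)
          rw [Function.comp_apply, Function.comp_apply, pr_coe, dist_eq_norm] at hra
          exact hra.le
        · exact hC a (mem_univ a)

lemma IsL1Approx.tendsto_integral {φ : unitInterval → unitInterval → ℝ}
    {f : ℝ → ℝ} (h : IsL1Approx φ f) :
    Tendsto (partitionSum fun a b => ((b : ℝ) - a) * φ a b) refinements
      (𝓝 (∫ r in (0 : ℝ)..1, f r)) := by
  have hf := h.intervalIntegrable
  have hfL1 := tendsto_partitionSum_integral hf
  have hcell (a b : unitInterval) (hab : a < b) :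
      |((b : ℝ) - a) * φ a b - ∫ r in (a : ℝ)..b, f r| ≤ ∫ r in (a : ℝ)..b, ‖f r - φ a b‖ := by
    rw [← smul_eq_mul, ← intervalIntegral.integral_const, ← intervalIntegral.integral_sub
      intervalIntegrable_const (intervalIntegrable_coe_unitInterval hf a b)]
    simp only [norm_sub_rev (f _)]
    exact intervalIntegral.abs_integral_le_integral_abs (Subtype.coe_le_coe.2 hab.le)
  have hlower := tendsto_partitionSum_add hfL1
    (tendsto_partitionSum_const_mul (-1) h.tendsto_zero)
  have hupper := tendsto_partitionSum_add hfL1 h.tendsto_zero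
  rw [mul_zero, add_zero] at hlower
  rw [add_zero] at hupper
  refine tendsto_of_tendsto_of_tendsto_of_le_of_le hlower hupper
    (partitionSum_mono fun a b hab => ?_) (partitionSum_mono fun a b hab => ?_)
  · linarith [(abs_le.1 (hcell a b hab)).1]
  · linarith [(abs_le.1 (hcell a b hab)).2]

lemma isL1Approx_average [CompleteSpace E] {f : ℝ → E} (hf : IntervalIntegrable f volume 0 1) :
    IsL1Approx (fun a b => ⨍ r in (a : ℝ)..b, f r) f := by
  refine isL1Approx_of_forall_le hf fun ε hε => ?_
  obtain ⟨g, hg_supp, hgε, hg, -⟩ :=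
    Integrable.exists_hasCompactSupport_integral_sub_le hf.1 (ε := ε / 8) (by positivity)
  rw [← intervalIntegral.integral_of_le zero_le_one] at hgε
  have hfg : IntervalIntegrable (fun r => ‖f r - g r‖) volume 0 1 :=
    (hf.sub (hg.intervalIntegrable 0 1)).norm
  obtain ⟨δ, hδ, hgδ⟩ := Metric.uniformContinuous_iff.1
    (hg_supp.uniformContinuous_of_continuous hg) (ε / 8) (by positivity)
  refine ⟨_, _, ?_, tendsto_partitionSum_const_mul 2 (tendsto_partitionSum_add
    (tendsto_partitionSum_integral hfg) (tendsto_partitionSum_integral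
      (intervalIntegrable_const (c := ε / 8)))), δ, hδ, fun a b hab hδab => ?_⟩
  · rw [intervalIntegral.integral_const, sub_zero, one_smul]
    linarith
  have hfgi := intervalIntegrable_coe_unitInterval hfg a b
  refine (integral_norm_sub_average_le hab (intervalIntegrable_coe_unitInterval hf a b)
    (g a)).trans ?_
  rw [← intervalIntegral.integral_add hfgi intervalIntegrable_const]
  refine mul_le_mul_of_nonneg_left (intervalIntegral.integral_mono_on (Subtype.coe_le_coe.2 hab.le)
    (intervalIntegrable_norm_sub_const hf a b _) (hfgi.add intervalIntegrable_const) fun r hr => ?_)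
    zero_le_two
  have hra := hgδ (dist_left_lt_of_mem_Icc hδab hr)
  rw [dist_eq_norm] at hra
  exact (norm_sub_le_norm_sub_add_norm_sub _ _ _).trans (add_le_add_right hra.le _)

lemma isL1Approx_partialSups {ψ : ℕ → unitInterval → unitInterval → ℝ} {g : ℕ → ℝ → ℝ}
    (h : ∀ n, IsL1Approx (ψ n) (g n)) (N : ℕ) :
    IsL1Approx (fun a b => partialSups (fun n => ψ n a b) N)
      fun r => partialSups (fun n => g n r) N := by
  induction N with
  | zero => simpa only [partialSups_zero] using h 0
  | succ N ih =>
    simpa only [partialSups_add_one] using (ih.prodMk (h (N + 1))).map lipschitzWith_max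

lemma IsL1Approx.of_sandwich {φ φ' : unitInterval → unitInterval → ℝ} {f : ℝ → ℝ}
    {ψ : ℕ → unitInterval → unitInterval → ℝ} {g : ℕ → ℝ → ℝ}
    (hφ' : IsL1Approx φ' f) (hψ : ∀ N, IsL1Approx (ψ N) (g N))
    (hφφ' : ∀ a b, a < b → φ a b ≤ φ' a b) (hψφ : ∀ N a b, a < b → ψ N a b ≤ φ a b)
    (hg : Tendsto (fun N => ∫ r in (0 : ℝ)..1, |f r - g N r|) atTop (𝓝 0)) :
    IsL1Approx φ f := by
  refine isL1Approx_of_forall_le hφ'.intervalIntegrable fun ε hε => ?_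
  obtain ⟨N, hN⟩ := (hg.eventually_lt_const hε).exists
  have hfg : IntervalIntegrable (fun r => |f r - g N r|) volume 0 1 :=
    (hφ'.intervalIntegrable.sub (hψ N).intervalIntegrable).abs
  refine ⟨_, _, ?_, tendsto_partitionSum_add (tendsto_partitionSum_add hφ'.tendsto_zero
    (hψ N).tendsto_zero) (tendsto_partitionSum_integral hfg), 1, one_pos, fun a b hab _ => ?_⟩
  · rwa [add_zero, zero_add]
  have hφ'i := intervalIntegrable_norm_sub_const hφ'.intervalIntegrable a b (φ' a b)
  have hψi := intervalIntegrable_norm_sub_const (hψ N).intervalIntegrable a b (ψ N a b)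
  have hfgi := intervalIntegrable_coe_unitInterval hfg a b
  rw [← intervalIntegral.integral_add hφ'i hψi,
    ← intervalIntegral.integral_add (hφ'i.add hψi) hfgi]
  refine intervalIntegral.integral_mono_on (Subtype.coe_le_coe.2 hab.le)
    (intervalIntegrable_norm_sub_const hφ'.intervalIntegrable a b _) ((hφ'i.add hψi).add hfgi)
    fun r _ => ?_
  simp only [Real.norm_eq_abs]
  grind [hφφ' a b hab, hψφ N a b hab]

end L1Approx

section Speed

lemma tendsto_norm_sub_div_dist {E : Type*} [NormedAddCommGroup E] [NormedSpace ℝ E]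
    {f : ℝ → E} {f' : E} {t : unitInterval} (hf : HasDerivAt f f' t) :
    Tendsto (fun s : unitInterval => ‖f s - f t‖ / dist s t) (𝓝[≠] t) (𝓝 ‖f'‖) := by
  have hcoe : Tendsto ((↑) : unitInterval → ℝ) (𝓝[≠] t) (𝓝[≠] t) :=
    continuous_subtype_val.continuousWithinAt.tendsto_nhdsWithin fun _ hs =>
      Subtype.coe_ne_coe.2 hs
  refine ((hasDerivAt_iff_tendsto_slope.1 hf).norm.comp hcoe).congr fun s => ?_
  rw [Function.comp_apply, slope_def_module, norm_smul, norm_inv, inv_mul_eq_div, Subtype.dist_eq,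
    dist_eq_norm]

variable {E : Type*} [NormedAddCommGroup E] [NormedSpace ℝ E] {γ : Curve Z} {t : unitInterval}
  {f : ℝ → E} {f' : E}

lemma speed_le_of_dist_le (hf : HasDerivAt f f' t)
    (hle : ∀ s : unitInterval, dist (γ s) (γ t) ≤ ‖f s - f t‖) : speed γ t ≤ ‖f'‖ := by
  have hlim := tendsto_norm_sub_div_dist hf
  rw [← hlim.limsup_eq]
  exact limsup_le_limsup (.of_forall fun s => div_le_div_of_nonneg_right (hle s) dist_nonneg)
    (isCoboundedUnder_le_of_le _ fun s => div_nonneg dist_nonneg dist_nonneg)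
    hlim.isBoundedUnder_le

-- `f` bounds the difference quotients of `γ`: the `limsup` of an unbounded real function is the
-- junk value `0`.
lemma le_speed_of_le_dist {F : Type*} [NormedAddCommGroup F] [NormedSpace ℝ F] {g : ℝ → F} {g' : F}
    (hf : HasDerivAt f f' t)
    (hle : ∀ s : unitInterval, dist (γ s) (γ t) ≤ ‖f s - f t‖) (hg : HasDerivAt g g' t)
    (hge : ∀ s : unitInterval, ‖g s - g t‖ ≤ dist (γ s) (γ t)) : ‖g'‖ ≤ speed γ t := by
  have hlim := tendsto_norm_sub_div_dist hg
  rw [← hlim.limsup_eq]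
  exact limsup_le_limsup (.of_forall fun s => div_le_div_of_nonneg_right (hge s) dist_nonneg)
    (isCoboundedUnder_le_of_le _ fun s => div_nonneg (norm_nonneg _) dist_nonneg)
    ((tendsto_norm_sub_div_dist hf).isBoundedUnder_le.mono_le
      (.of_forall fun s => div_le_div_of_nonneg_right (hle s) dist_nonneg))

lemma speedR_coe (γ : Curve Z) (t : unitInterval) : speedR γ t = speed γ t :=
  congrArg (speed γ) (pr_coe t)

end Speed

lemma absolutelyContinuousOnInterval_of_dist_le {W W' : Type*} [PseudoMetricSpace W]
    [PseudoMetricSpace W'] {f : ℝ → W} {g : ℝ → W'} {a b : ℝ}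
    (hf : AbsolutelyContinuousOnInterval f a b)
    (hle : ∀ s ∈ uIcc a b, ∀ t ∈ uIcc a b, dist (g s) (g t) ≤ dist (f s) (f t)) :
    AbsolutelyContinuousOnInterval g a b := by
  rw [absolutelyContinuousOnInterval_iff] at hf ⊢
  intro ε hε
  obtain ⟨δ, hδ, hfδ⟩ := hf ε hε
  refine ⟨δ, hδ, fun I hI hIδ => (Finset.sum_le_sum fun i hi => ?_).trans_lt (hfδ I hI hIδ)⟩
  exact hle _ (hI.1 i hi).1 _ (hI.1 i hi).2

section SpeedBound

variable {γ : Curve Z}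

/-- An integrable function whose integrals over subintervals of `[0, 1]` dominate the increments
of the curve `γ`. Almost everywhere it is an upper bound for the metric speed of `γ`. -/
structure IsSpeedBound (γ : Curve Z) (K : ℝ → ℝ) : Prop where
  intervalIntegrable : IntervalIntegrable K volume 0 1
  dist_le : ∀ a b : unitInterval, a ≤ b → dist (γ a) (γ b) ≤ ∫ r in (a : ℝ)..b, K r

lemma IsAC.exists_isSpeedBound (hγ : IsAC γ) : ∃ K, IsSpeedBound γ K :=
  let ⟨K, _, hK, hle⟩ := hγ
  ⟨K, (intervalIntegrable_iff_integrableOn_Icc_of_le zero_le_one).2 hK, hle⟩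

lemma IsSpeedBound.dist_le_dist_integral {K : ℝ → ℝ} (hK : IsSpeedBound γ K) (a b : unitInterval) :
    dist (γ a) (γ b) ≤ dist (∫ r in (0 : ℝ)..a, K r) (∫ r in (0 : ℝ)..b, K r) := by
  wlog hab : a ≤ b generalizing a b
  · rw [dist_comm, dist_comm (∫ r in (0 : ℝ)..a, K r)]
    exact this b a (le_of_not_ge hab)
  rw [dist_comm (∫ r in (0 : ℝ)..a, K r), Real.dist_eq,
    integral_sub_integral_coe_unitInterval hK.intervalIntegrable]
  exact (hK.dist_le a b hab).trans (le_abs_self _)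

lemma IsSpeedBound.ae_hasDerivAt_integral {K : ℝ → ℝ} (hK : IsSpeedBound γ K) :
    ∀ᵐ t ∂volume.restrict (Ioc 0 1), HasDerivAt (fun x => ∫ r in (0 : ℝ)..x, K r) (K t) t := by
  filter_upwards [ae_restrict_of_ae hK.intervalIntegrable.ae_hasDerivAt_integral,
    ae_restrict_mem measurableSet_Ioc] with t hderiv ht
  exact hderiv (Ioc_subset_Icc_self.trans Icc_subset_uIcc ht) 0 left_mem_uIcc

lemma IsSpeedBound.ae_speedR_le {K : ℝ → ℝ} (hK : IsSpeedBound γ K) :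
    ∀ᵐ t ∂volume.restrict (Ioc 0 1), speedR γ t ≤ |K t| := by
  filter_upwards [hK.ae_hasDerivAt_integral, ae_restrict_mem measurableSet_Ioc] with t hderiv ht
  lift t to unitInterval using Ioc_subset_Icc_self ht
  rw [speedR_coe]
  exact speed_le_of_dist_le hderiv fun s => hK.dist_le_dist_integral s t

lemma IsSpeedBound.congr_ae {K K' : ℝ → ℝ} (hK : IsSpeedBound γ K)
    (h : K =ᵐ[volume.restrict (Ioc 0 1)] K') : IsSpeedBound γ K' where
  intervalIntegrable := hK.intervalIntegrable.congr_ae (by rwa [uIoc_of_le zero_le_one])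
  dist_le a b hab := (hK.dist_le a b hab).trans_eq <| intervalIntegral.integral_congr_ae_restrict <|
    ae_restrict_of_ae_restrict_of_subset
      ((uIoc_of_le (Subtype.coe_le_coe.2 hab)).trans_subset (Ioc_subset_Ioc a.2.1 b.2.2)) h

end SpeedBound

section DistDeriv

variable {γ : Curve Z}

/-- The derivative of the distance from a moving point of the curve `γ` to `z`. -/
def distDeriv (γ : Curve Z) (z : Z) (t : ℝ) : ℝ := deriv (fun r => dist (γ (pr r)) z) t

/-- The supremum of the rates of change of the distances to a dense sequence of points of the
curve `γ`; it is an auxiliary measurable version of the metric speed of `γ`. -/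
def supDistDeriv (γ : Curve Z) (t : ℝ) : ℝ :=
  ⨆ n, |distDeriv γ (γ (TopologicalSpace.denseSeq unitInterval n)) t|

lemma IsAC.absolutelyContinuousOnInterval_dist (hγ : IsAC γ) (z : Z) :
    AbsolutelyContinuousOnInterval (fun r => dist (γ (pr r)) z) 0 1 := by
  obtain ⟨K, hK⟩ := hγ.exists_isSpeedBound
  refine absolutelyContinuousOnInterval_of_dist_le
    (hK.intervalIntegrable.absolutelyContinuousOnInterval_intervalIntegral left_mem_uIcc)
    fun s hs t ht => ?_
  rw [uIcc_of_le zero_le_one] at hs ht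
  lift s to unitInterval using hs
  lift t to unitInterval using ht
  rw [pr_coe, pr_coe]
  exact (dist_dist_dist_le_left _ _ _).trans (hK.dist_le_dist_integral s t)

lemma IsAC.intervalIntegrable_distDeriv (hγ : IsAC γ) (z : Z) :
    IntervalIntegrable (distDeriv γ z) volume 0 1 :=
  (hγ.absolutelyContinuousOnInterval_dist z).intervalIntegrable_deriv

lemma IsAC.integral_distDeriv (hγ : IsAC γ) (z : Z) (a b : unitInterval) :
    ∫ r in (a : ℝ)..b, distDeriv γ z r = dist (γ b) z - dist (γ a) z := by
  have hab : uIcc (a : ℝ) b ⊆ uIcc 0 1 :=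
    uIcc_subset_uIcc (Icc_subset_uIcc a.2) (Icc_subset_uIcc b.2)
  simpa only [distDeriv, pr_coe] using
    ((hγ.absolutelyContinuousOnInterval_dist z).mono hab).integral_deriv_eq_sub

lemma IsAC.ae_abs_distDeriv_le (hγ : IsAC γ) (z : Z) :
    ∀ᵐ t ∂volume.restrict (Ioc 0 1), |distDeriv γ z t| ≤ speedR γ t := by
  obtain ⟨K, hK⟩ := hγ.exists_isSpeedBound
  filter_upwards [hK.ae_hasDerivAt_integral,
    ae_restrict_of_ae (hγ.absolutelyContinuousOnInterval_dist z).ae_differentiableAt,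
    ae_restrict_mem measurableSet_Ioc] with t hderiv hdiff ht
  have ht' := Icc_subset_uIcc (Ioc_subset_Icc_self ht)
  lift t to unitInterval using Ioc_subset_Icc_self ht
  rw [speedR_coe]
  refine le_speed_of_le_dist hderiv (fun s => hK.dist_le_dist_integral s t)
    (hdiff ht').hasDerivAt fun s => ?_
  rw [pr_coe, pr_coe]
  exact abs_dist_sub_le _ _ _

lemma IsAC.ae_bddAbove_abs_distDeriv (hγ : IsAC γ) (z : ℕ → Z) :
    ∀ᵐ t ∂volume.restrict (Ioc 0 1), BddAbove (range fun n => |distDeriv γ (z n) t|) :=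
  (ae_all_iff.2 fun n => hγ.ae_abs_distDeriv_le (z n)).mono fun _ h =>
    ⟨_, forall_mem_range.2 h⟩

lemma IsAC.supDistDeriv_ae_le_speedR (hγ : IsAC γ) :
    supDistDeriv γ ≤ᵐ[volume.restrict (Ioc 0 1)] speedR γ :=
  (ae_all_iff.2 fun _ => hγ.ae_abs_distDeriv_le _).mono fun _ => ciSup_le

lemma supDistDeriv_nonneg (γ : Curve Z) (t : ℝ) : 0 ≤ supDistDeriv γ t :=
  Real.iSup_nonneg fun _ => abs_nonneg _

lemma IsAC.intervalIntegrable_supDistDeriv (hγ : IsAC γ) :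
    IntervalIntegrable (supDistDeriv γ) volume 0 1 := by
  obtain ⟨K, hK⟩ := hγ.exists_isSpeedBound
  have hmeas : Measurable (supDistDeriv γ) := .iSup fun _ => (measurable_deriv _).abs
  refine hK.intervalIntegrable.abs.mono_fun' hmeas.aestronglyMeasurable ?_
  rw [uIoc_of_le zero_le_one]
  filter_upwards [hγ.supDistDeriv_ae_le_speedR, hK.ae_speedR_le] with t hsup hspeed
  rw [Real.norm_of_nonneg (supDistDeriv_nonneg γ t)]
  exact hsup.trans hspeed

lemma IsAC.isSpeedBound_supDistDeriv (hγ : IsAC γ) : IsSpeedBound γ (supDistDeriv γ) where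
  intervalIntegrable := hγ.intervalIntegrable_supDistDeriv
  dist_le a b hab := by
    have hdense : ∀ c, |dist (γ b) (γ c) - dist (γ a) (γ c)| ≤
        ∫ r in (a : ℝ)..b, supDistDeriv γ r := by
      refine fun c => (TopologicalSpace.denseRange_denseSeq unitInterval).induction_on c
        (isClosed_le (by fun_prop) continuous_const) fun n => ?_
      rw [← hγ.integral_distDeriv, ← Real.norm_eq_abs]
      refine intervalIntegral.norm_integral_le_of_norm_le hab ?_
        (intervalIntegrable_coe_unitInterval hγ.intervalIntegrable_supDistDeriv a b)
      rw [← ae_restrict_iff' measurableSet_Ioc]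
      refine ae_restrict_of_ae_restrict_of_subset (Ioc_subset_Ioc a.2.1 b.2.2) ?_
      filter_upwards [hγ.ae_bddAbove_abs_distDeriv fun n =>
        γ (TopologicalSpace.denseSeq unitInterval n)] with t ht using le_ciSup ht n
    simpa only [dist_self, zero_sub, abs_neg, abs_dist] using hdense b

lemma IsAC.supDistDeriv_ae_eq_speedR (hγ : IsAC γ) :
    supDistDeriv γ =ᵐ[volume.restrict (Ioc 0 1)] speedR γ := by
  filter_upwards [hγ.supDistDeriv_ae_le_speedR, hγ.isSpeedBound_supDistDeriv.ae_speedR_le]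
    with t hle hge
  exact hle.antisymm (hge.trans_eq (abs_of_nonneg (supDistDeriv_nonneg γ t)))

lemma IsAC.isSpeedBound_speedR (hγ : IsAC γ) : IsSpeedBound γ (speedR γ) :=
  hγ.isSpeedBound_supDistDeriv.congr_ae hγ.supDistDeriv_ae_eq_speedR

lemma IsAC.isL1Approx_speedR (hγ : IsAC γ) :
    IsL1Approx (fun a b => dist (γ a) (γ b) / ((b : ℝ) - a)) (speedR γ) := by
  have hspeed := hγ.isSpeedBound_speedR
  set g : ℕ → ℝ → ℝ := fun n => distDeriv γ (γ (TopologicalSpace.denseSeq unitInterval n))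
  have hg (n) : IntervalIntegrable (g n) volume 0 1 := hγ.intervalIntegrable_distDeriv _
  refine (isL1Approx_average hspeed.intervalIntegrable).of_sandwich
    (isL1Approx_partialSups fun n => (isL1Approx_average (hg n)).map lipschitzWith_one_norm)
    (fun a b hab => ?_) (fun N a b hab => partialSups_le _ _ _ fun n _ => ?_) ?_
  · rw [interval_average_eq_div]
    exact div_le_div_of_nonneg_right (hspeed.dist_le a b hab.le)
      (sub_nonneg.2 (Subtype.coe_le_coe.2 hab.le))
  · rw [interval_average_eq_div, hγ.integral_distDeriv, norm_div, dist_comm (γ a) (γ b),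
      Real.norm_of_nonneg (sub_nonneg.2 (Subtype.coe_le_coe.2 hab.le))]
    exact div_le_div_of_nonneg_right (abs_dist_sub_le _ _ _)
      (sub_nonneg.2 (Subtype.coe_le_coe.2 hab.le))
  · have hlim := tendsto_integral_abs_iSup_sub_partialSups (fun n => (hg n).1.abs)
      (hγ.ae_bddAbove_abs_distDeriv _) hγ.intervalIntegrable_supDistDeriv.1
    refine hlim.congr fun N => ?_
    rw [intervalIntegral.integral_of_le zero_le_one]
    refine integral_congr_ae ?_
    filter_upwards [hγ.supDistDeriv_ae_eq_speedR] with t ht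
    simp only [← ht, supDistDeriv, g, Real.norm_eq_abs]

end DistDeriv

theorem warped_length_eq_integral_general
    {X : Type*} [MetricSpace X] {Y : Type*} [MetricSpace Y] {w : unitInterval → ℝ}
    (hw : Continuous w) {γY : Curve Y} {γX : Curve X} (hY : IsAC γY) (hX : IsAC γX) :
    Tendsto
      (partitionSum fun a b => √(dist (γY a) (γY b) ^ 2 + w a ^ 2 * dist (γX a) (γX b) ^ 2))
      refinements
      (𝓝 (∫ t in Icc (0 : ℝ) 1, √(speedR γY t ^ 2 + w (pr t) ^ 2 * speedR γX t ^ 2))) := by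
  have hlim := ((hY.isL1Approx_speedR.prodMk (hX.isL1Approx_speedR.smul hw)).map
    (lipschitzWith_one_norm.comp (WithLp.prod_lipschitzWith_toLp 2 ℝ ℝ))).tendsto_integral
  simp only [Function.comp_apply, WithLp.prod_norm_eq_of_L2, WithLp.toLp_fst, WithLp.toLp_snd,
    Real.norm_eq_abs, sq_abs, smul_eq_mul, mul_pow] at hlim
  rw [integral_Icc_eq_integral_Ioc, ← intervalIntegral.integral_of_le zero_le_one]
  refine hlim.congr (partitionSum_congr fun a b hab => ?_)
  have hba : 0 < (b : ℝ) - a := sub_pos.2 hab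
  simp only [div_pow, ← mul_div_assoc, ← add_div]
  rw [Real.sqrt_div' _ (sq_nonneg _), Real.sqrt_sq hba.le, mul_div_cancel₀ _ hba.ne']

/-- **Lemma (warped length of curves).** For a curve `γ = (γ^Y, γ^X)` with absolutely
continuous components, the warped length, i.e. the limit over refining partitions of
`Σ sqrt (d_Y²(γ^Y_{t_{i-1}}, γ^Y_{t_i}) + w_d²(γ^Y_{t_{i-1}})·d_X²(γ^X_{t_{i-1}}, γ^X_{t_i}))`,
exists and equals `∫₀¹ sqrt (|γ̇^Y_t|² + w_d²(γ^Y_t)·|γ̇^X_t|²) dt`. -/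
theorem warped_length_eq_integral
    {X : Type*} [MetricSpace X] {Y : Type*} [MetricSpace Y]
    (hX : IsLengthSpace X) (hY : IsLengthSpace Y)
    (wd : Y → ℝ) (hwd : Continuous wd) (hwdnn : ∀ y, 0 ≤ wd y)
    (γY : Curve Y) (γX : Curve X) (hY' : IsAC γY) (hX' : IsAC γX) :
    Tendsto
      (partitionSum fun a b =>
        Real.sqrt ((dist (γY a) (γY b)) ^ 2 + (wd (γY a)) ^ 2 * (dist (γX a) (γX b)) ^ 2))
      refinements
      (𝓝 (∫ t in Icc (0:ℝ) 1,
        Real.sqrt ((speedR γY t) ^ 2 + (wd (γY (pr t))) ^ 2 * (speedR γX t) ^ 2))) :=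
  warped_length_eq_integral_general (hwd.comp γY.continuous) hY' hX'

end MMS
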